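/- Let E be the Talagrand space on the dyadic tree T and E* its dual, a separable Schur space. Let Ω = Π_{n∈ℕ} {0,1}ⁿ with the product probability μ giving each point of {0,1}ⁿ mass 2^{-n}, P_n: Ω → {0,1}ⁿ the coordinate projections, and f_n(ω) = e*_{P_n(ω)}. Then for every δ > 0 and every weakly compact set W ⊆ E* there exists n ∈ ℕ with μ(f_n⁻¹(W)) < δ; consequently {f_n : n ∈ ℕ} is a relatively weakly compact subset of L¹(μ,E*) that is not a δS-set, and E* fails property (δS_μ). -/

import Mathlib

open MeasureTheory Filter Set ENNReal Pointwise

noncomputable section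

def IsWeaklyCompact {X : Type*} [NormedAddCommGroup X] [NormedSpace ℝ X] (W : Set X) : Prop :=
  IsCompact (toWeakSpace ℝ X '' W)

def IsRelWeaklyCompact {X : Type*} [NormedAddCommGroup X] [NormedSpace ℝ X] (W : Set X) : Prop :=
  IsCompact (closure (toWeakSpace ℝ X '' W))

variable {Ω : Type*} [MeasurableSpace Ω] {X : Type*} [NormedAddCommGroup X] [NormedSpace ℝ X]

/-- A set of functions in `L¹(μ,X)` is uniformly integrable if it is bounded and the integrals
of the norms over small sets are uniformly small. -/
def UnifIntegrableSet (μ : Measure Ω) (K : Set (Lp X 1 μ)) : Prop :=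
  (∃ C : ℝ, ∀ f ∈ K, ‖f‖ ≤ C) ∧
  ∀ ε : ℝ, 0 < ε → ∃ δ : ℝ, 0 < δ ∧ ∀ f ∈ K, ∀ A : Set Ω, μ A ≤ ENNReal.ofReal δ →
    ∫ ω in A, ‖(f : Ω → X) ω‖ ∂μ ≤ ε

/-- `K ⊆ L¹(μ,X)` is a δS-set if it is uniformly integrable and for every `δ > 0` there is a
weakly compact `W ⊆ X` with `μ (f ⁻¹' W) ≥ 1 - δ` for all `f ∈ K`. -/
def IsDeltaSSet (μ : Measure Ω) (K : Set (Lp X 1 μ)) : Prop :=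
  UnifIntegrableSet μ K ∧
  ∀ δ : ℝ, 0 < δ → ∃ W : Set X, IsWeaklyCompact W ∧
    ∀ f ∈ K, 1 - ENNReal.ofReal δ ≤ μ ((f : Ω → X) ⁻¹' W)

/-- A Banach space `X` has property (δSμ) if every relatively weakly compact subset of
`L¹(μ,X)` is a δS-set. -/
def DeltaSProp (μ : Measure Ω) (X : Type*) [NormedAddCommGroup X] [NormedSpace ℝ X] : Prop :=
  ∀ K : Set (Lp X 1 μ), IsRelWeaklyCompact K → IsDeltaSSet μ K

/-- The dyadic tree `T = ⋃ₙ {0,1}ⁿ`: nonempty finite sequences of `0`s and `1`s. -/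
def DyadicTree : Type := {l : List Bool // l ≠ []}

/-- `τ ⪰ σ` iff `τ` extends `σ`. -/
def DyadicTree.Ext (σ τ : DyadicTree) : Prop := σ.1 <+: τ.1

/-- The element of the dyadic tree determined by a point of `{0,1}ⁿ⁺¹`. -/
def node {n : ℕ} (v : Fin (n + 1) → Bool) : DyadicTree :=
  ⟨List.ofFn v, by
    intro h
    have := congrArg List.length h
    simp at this⟩

instance finite_level (n : ℕ) : Finite {σ : DyadicTree // σ.1.length = n} :=
  have := (List.finite_length_eq Bool n).to_subtype
  Finite.of_injective
    (fun σ : {σ : DyadicTree // σ.1.length = n} => (⟨σ.1.1, σ.2⟩ : {l : List Bool | l.length = n}))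
    fun _ _ h => by
      have h' := congrArg Subtype.val h
      exact Subtype.ext (Subtype.ext h')

lemma DyadicTree.Ext.take_eq {σ τ : DyadicTree} (h : σ.Ext τ) : τ.1.take σ.1.length = σ.1 :=
  (List.prefix_iff_eq_take.1 h).symm

/-- The supremum of `|a|` over the extensions of `σ`. -/
def levelSup (a : DyadicTree →₀ ℝ) (σ : DyadicTree) : ℝ :=
  sSup {r : ℝ | ∃ τ : DyadicTree, σ.Ext τ ∧ r = |a τ|}

lemma levelSup_le {a : DyadicTree →₀ ℝ} {σ : DyadicTree} {c : ℝ}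
    (h : ∀ τ, σ.Ext τ → |a τ| ≤ c) : levelSup a σ ≤ c :=
  csSup_le ⟨_, σ, List.prefix_refl _, rfl⟩ (by rintro _ ⟨τ, hτ, rfl⟩; exact h τ hτ)

lemma le_levelSup (a : DyadicTree →₀ ℝ) {σ τ : DyadicTree} (h : σ.Ext τ) :
    |a τ| ≤ levelSup a σ := by
  refine le_csSup ⟨∑ ρ ∈ a.support, |a ρ|, ?_⟩ ⟨τ, h, rfl⟩
  rintro _ ⟨ρ, -, rfl⟩
  by_cases hρ : ρ ∈ a.support
  · exact Finset.single_le_sum (f := fun ρ => |a ρ|) (fun _ _ => abs_nonneg _) hρ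
  · rw [Finsupp.notMem_support_iff.1 hρ, abs_zero]
    exact Finset.sum_nonneg fun _ _ => abs_nonneg _

lemma levelSup_nonneg (a : DyadicTree →₀ ℝ) (σ : DyadicTree) : 0 ≤ levelSup a σ :=
  (abs_nonneg _).trans (le_levelSup a (List.prefix_refl σ.1))

lemma levelSup_sq_le {a : DyadicTree →₀ ℝ} {σ : DyadicTree} {c : ℝ} (hc : 0 ≤ c)
    (h : ∀ τ, σ.Ext τ → a τ ^ 2 ≤ c) : levelSup a σ ^ 2 ≤ c := by
  rw [← Real.le_sqrt (levelSup_nonneg a σ) hc]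
  exact levelSup_le fun τ hτ => Real.abs_le_sqrt (h τ hτ)

open Classical in
lemma tsum_levelSup_sq_le (a : DyadicTree →₀ ℝ) (n : ℕ) :
    ∑' σ : {σ : DyadicTree // σ.1.length = n}, levelSup a σ.1 ^ 2 ≤ ∑ τ ∈ a.support, a τ ^ 2 := by
  have := Fintype.ofFinite {σ : DyadicTree // σ.1.length = n}
  rw [tsum_fintype]
  calc ∑ σ : {σ : DyadicTree // σ.1.length = n}, levelSup a σ.1 ^ 2
      ≤ ∑ σ : {σ : DyadicTree // σ.1.length = n}, ∑ τ ∈ a.support,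
          if σ.1.Ext τ then a τ ^ 2 else 0 := by
        refine Finset.sum_le_sum fun σ _ => ?_
        have h0 : ∀ τ ∈ a.support, (0 : ℝ) ≤ if σ.1.Ext τ then a τ ^ 2 else 0 := by
          intro τ _; split_ifs <;> positivity
        refine levelSup_sq_le (Finset.sum_nonneg h0) fun τ hτ => ?_
        by_cases hs : τ ∈ a.support
        · simpa [hτ] using Finset.single_le_sum h0 hs
        · rw [Finsupp.notMem_support_iff.1 hs]
          simpa using Finset.sum_nonneg h0
    _ = ∑ τ ∈ a.support, ∑ σ : {σ : DyadicTree // σ.1.length = n},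
          if σ.1.Ext τ then a τ ^ 2 else 0 := Finset.sum_comm
    _ ≤ ∑ τ ∈ a.support, a τ ^ 2 := by
        refine Finset.sum_le_sum fun τ _ => ?_
        rw [← Finset.sum_filter, Finset.sum_const, nsmul_eq_mul]
        refine mul_le_of_le_one_left (sq_nonneg _) ?_
        exact_mod_cast Finset.card_le_one.2 fun σ hσ ρ hρ => by
          rw [Finset.mem_filter] at hσ hρ
          have h1 := hσ.2.take_eq
          have h2 := hρ.2.take_eq
          rw [σ.2] at h1
          rw [ρ.2] at h2
          exact Subtype.ext (Subtype.ext (h1.symm.trans h2))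

/-- Talagrand's norm on finitely supported functions. -/
def treeNorm (a : DyadicTree →₀ ℝ) : ℝ :=
  ⨆ n : ℕ, Real.sqrt (∑' σ : {σ : DyadicTree // σ.1.length = n + 1}, levelSup a σ.1 ^ 2)

/-- Talagrand's norm dominates the `ℓ²` norm along nodes with distinct restrictions to a level. -/
lemma sum_sq_le_treeNorm_sq (a : DyadicTree →₀ ℝ) {ι : Type*} (s : Finset ι) (f : ι → DyadicTree)
    (n : ℕ) (hlen : ∀ i ∈ s, n + 1 ≤ (f i).1.length)
    (hinj : ∀ i ∈ s, ∀ j ∈ s, (f i).1.take (n + 1) = (f j).1.take (n + 1) → i = j) :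
    ∑ i ∈ s, a (f i) ^ 2 ≤ treeNorm a ^ 2 := by
  classical
  have := Fintype.ofFinite {σ : DyadicTree // σ.1.length = n + 1}
  have h1 : Real.sqrt (∑' σ : {σ : DyadicTree // σ.1.length = n + 1}, levelSup a σ.1 ^ 2)
      ≤ treeNorm a := by
    refine le_ciSup (f := fun n : ℕ => Real.sqrt
      (∑' σ : {σ : DyadicTree // σ.1.length = n + 1}, levelSup a σ.1 ^ 2)) ?_ n
    refine ⟨Real.sqrt (∑ τ ∈ a.support, a τ ^ 2), ?_⟩
    rintro _ ⟨n, rfl⟩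
    exact Real.sqrt_le_sqrt (tsum_levelSup_sq_le a _)
  refine le_trans ?_ (Real.sqrt_le_iff.1 h1).2
  rw [tsum_fintype]
  have hl : ∀ i ∈ s, ((f i).1.take (n + 1)).length = n + 1 := fun i hi => by
    simpa using hlen i hi
  let F : ι → {σ : DyadicTree // σ.1.length = n + 1} := fun i =>
    if hi : i ∈ s then ⟨⟨(f i).1.take (n + 1), by
      intro h
      have := hl i hi
      rw [h] at this
      simp at this⟩, hl i hi⟩ else ⟨⟨List.replicate (n + 1) true, by simp⟩, by simp⟩
  have hF : ∀ i ∈ s, (F i).1.1 = (f i).1.take (n + 1) := fun i hi => by simp [F, hi]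
  calc ∑ i ∈ s, a (f i) ^ 2 ≤ ∑ i ∈ s, levelSup a (F i).1 ^ 2 := by
        refine Finset.sum_le_sum fun i hi => ?_
        rw [← sq_abs]
        refine pow_le_pow_left₀ (abs_nonneg _) (le_levelSup a ?_) 2
        rw [DyadicTree.Ext, hF i hi]
        exact List.take_prefix _ _
    _ = ∑ σ ∈ s.image F, levelSup a σ.1 ^ 2 := by
        refine (Finset.sum_image (f := fun σ : {σ : DyadicTree // σ.1.length = n + 1} =>
          levelSup a σ.1 ^ 2) fun i hi j hj hij => ?_).symm
        refine hinj i hi j hj ?_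
        rw [← hF i hi, ← hF j hj, hij]
    _ ≤ _ := Finset.sum_le_sum_of_subset_of_nonneg (Finset.subset_univ _)
      fun _ _ _ => sq_nonneg _

/-- Talagrand's norm of an indicator whose support meets each level in at most two nodes, up to
restriction. -/
lemma treeNorm_le_of_two_branches (a : DyadicTree →₀ ℝ) (ha : ∀ σ, a σ ^ 2 ≤ 1)
    (h : ∀ n : ℕ, ∃ p q : List Bool, ∀ τ, a τ ≠ 0 → n + 1 ≤ τ.1.length →
      τ.1.take (n + 1) = p ∨ τ.1.take (n + 1) = q) :
    treeNorm a ≤ 2 := by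
  classical
  refine ciSup_le fun n => ?_
  have := Fintype.ofFinite {σ : DyadicTree // σ.1.length = n + 1}
  obtain ⟨p, q, hpq⟩ := h n
  rw [tsum_fintype, Real.sqrt_le_left (by norm_num)]
  calc ∑ σ : {σ : DyadicTree // σ.1.length = n + 1}, levelSup a σ.1 ^ 2
      ≤ ∑ σ : {σ : DyadicTree // σ.1.length = n + 1},
          ((if σ.1.1 = p then 1 else 0) + (if σ.1.1 = q then 1 else 0) : ℝ) := by
        refine Finset.sum_le_sum fun σ _ => levelSup_sq_le (by positivity) fun τ hτ => ?_
        by_cases h0 : a τ = 0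
        · rw [h0]; norm_num; positivity
        · have ht := hτ.take_eq
          rw [σ.2] at ht
          have hle : n + 1 ≤ τ.1.length := σ.2 ▸ hτ.length_le
          have := ha τ
          rcases hpq τ h0 hle with h | h <;> rw [ht] at h <;> simp only [h, if_true] <;>
            split_ifs <;> linarith
    _ ≤ 1 + 1 := by
        rw [Finset.sum_add_distrib]
        have key : ∀ r : List Bool, ∑ σ : {σ : DyadicTree // σ.1.length = n + 1},
            (if σ.1.1 = r then 1 else 0 : ℝ) ≤ 1 := fun r => by
          rw [Finset.sum_boole]
          exact_mod_cast Finset.card_le_one.2 fun σ hσ ρ hρ => by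
            rw [Finset.mem_filter] at hσ hρ
            exact Subtype.ext (Subtype.ext (hσ.2.trans hρ.2.symm))
        exact add_le_add (key p) (key q)
    _ ≤ 2 ^ 2 := by norm_num

lemma exists_append_infinite {A : Set DyadicTree} {l : List Bool}
    (h : {σ ∈ A | l <+: σ.1}.Infinite) : ∃ b : Bool, {σ ∈ A | l ++ [b] <+: σ.1}.Infinite := by
  by_contra! hb
  have hs : {σ : DyadicTree | σ.1 = l}.Finite :=
    Set.Subsingleton.finite fun σ hσ τ hτ => Subtype.ext (hσ.trans hτ.symm)
  refine h ((hs.union ((hb true).union (hb false))).subset ?_)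
  rintro σ ⟨hσ, t, ht⟩
  rcases t with _ | ⟨b, t⟩
  · exact Or.inl (by simpa using ht.symm)
  · have hp : l ++ [b] <+: σ.1 := ⟨t, by simpa using ht⟩
    cases b
    · exact Or.inr (Or.inr ⟨hσ, hp⟩)
    · exact Or.inr (Or.inl ⟨hσ, hp⟩)

/-- An infinite subset of the dyadic tree has infinitely many elements along a branch. -/
lemma exists_branch {A : Set DyadicTree} (hA : A.Infinite) :
    ∃ p : ℕ → List Bool, (∀ n, (p n).length = n) ∧ (∀ m n, m ≤ n → p m <+: p n) ∧
      ∀ n, ∃ σ ∈ A, p n <+: σ.1 := by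
  choose b hb using fun l : {l : List Bool // {σ ∈ A | l <+: σ.1}.Infinite} =>
    exists_append_infinite l.2
  let P : ℕ → {l : List Bool // {σ ∈ A | l <+: σ.1}.Infinite} := fun n =>
    Nat.rec ⟨[], by simpa using hA⟩ (fun _ l => ⟨l.1 ++ [b l], hb l⟩) n
  have hP : ∀ n, (P (n + 1)).1 = (P n).1 ++ [b (P n)] := fun n => rfl
  refine ⟨fun n => (P n).1, fun n => ?_, fun m n h => ?_, fun n => ?_⟩
  · induction n with
    | zero => rfl
    | succ n ih => simp only [hP, List.length_append, ih, List.length_singleton]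
  · induction n, h using Nat.le_induction with
    | base => exact List.prefix_refl _
    | succ n _ ih => exact ih.trans ⟨[b (P n)], rfl⟩
  · obtain ⟨σ, hσ⟩ := (P n).2.nonempty
    exact ⟨σ, hσ⟩

/-- An infinite subset of the dyadic tree contains a sequence hanging off a branch: its elements
have at most two restrictions to each level. -/
lemma exists_seq_two_branches {A : Set DyadicTree} (hA : A.Infinite) :
    ∃ u : ℕ → DyadicTree, Function.Injective u ∧ (∀ k, u k ∈ A) ∧
      ∀ n : ℕ, ∃ p q : List Bool, ∀ k, n + 1 ≤ (u k).1.length →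
        (u k).1.take (n + 1) = p ∨ (u k).1.take (n + 1) = q := by
  classical
  obtain ⟨p, hlen, hmono, hex⟩ := exists_branch hA
  choose v hvA hv using hex
  let N : ℕ → ℕ := fun k => Nat.rec 0 (fun _ m => (v m).1.length + 1) k
  have hN : ∀ k, N (k + 1) = (v (N k)).1.length + 1 := fun k => rfl
  have hle : ∀ n, n ≤ (v n).1.length := fun n => (hlen n).symm.le.trans (hv n).length_le
  have hNmono : StrictMono N := strictMono_nat_of_lt_succ fun k => by
    have := hle (N k)
    rw [hN]; omega
  have hlt : ∀ k j, k < j → (v (N k)).1.length + 1 ≤ N j := fun k j h => by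
    rw [← hN]; exact hNmono.monotone h
  refine ⟨fun k => v (N k), ?_, fun k => hvA _,
    fun n => ?_⟩
  · have hmono' : StrictMono fun k => (v (N k)).1.length := fun k j h => by
      have h1 := hlt k j h
      have h2 := hle (N j)
      show (v (N k)).1.length < (v (N j)).1.length
      omega
    exact Function.Injective.of_comp (f := fun σ : DyadicTree => σ.1.length) hmono'.injective
  · by_cases h : ∃ k, n + 1 ≤ (v (N k)).1.length
    · refine ⟨(v (N (Nat.find h))).1.take (n + 1), p (n + 1), fun j hj => ?_⟩
      rcases (Nat.find_min' h hj).eq_or_lt with heq | hlt'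
      · exact Or.inl (by rw [heq])
      · right
        have h1 := hlt _ _ hlt'
        have h2 := Nat.find_spec h
        have h3 := (hmono (n + 1) (N j) (by omega)).trans (hv (N j))
        rw [List.prefix_iff_eq_take, hlen] at h3
        exact h3.symm
    · exact ⟨[], [], fun k hk => (h ⟨k, hk⟩).elim⟩

section TreeSpace

variable {E : Type*} [NormedAddCommGroup E] [NormedSpace ℝ E] {e : DyadicTree → E}
  {estar : DyadicTree → E →L[ℝ] ℝ}

lemma coord_apply_sum (hbi1 : ∀ σ : DyadicTree, estar σ (e σ) = 1)
    (hbi0 : ∀ σ τ : DyadicTree, σ ≠ τ → estar σ (e τ) = 0) (a : DyadicTree →₀ ℝ)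
    (τ : DyadicTree) : estar τ (∑ σ ∈ a.support, a σ • e σ) = a τ := by
  rw [map_sum, Finset.sum_eq_single τ]
  · simp [hbi1]
  · intro σ _ h
    simp [hbi0 τ σ h.symm]
  · intro h
    simp [Finsupp.notMem_support_iff.1 h]

lemma norm_le_of_le_treeNorm
    (hnorm : ∀ a : DyadicTree →₀ ℝ, ‖∑ σ ∈ a.support, a σ • e σ‖ = treeNorm a)
    (hdense : (Submodule.span ℝ (Set.range e)).topologicalClosure = ⊤)
    (f : E →L[ℝ] ℝ) {C : ℝ} (hC : 0 ≤ C)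
    (h : ∀ a : DyadicTree →₀ ℝ, |f (∑ σ ∈ a.support, a σ • e σ)| ≤ C * treeNorm a) :
    ‖f‖ ≤ C := by
  refine f.opNorm_le_bound hC fun x => ?_
  have hx : x ∈ (Submodule.span ℝ (Set.range e)).topologicalClosure := by rw [hdense]; trivial
  have hcl : IsClosed {x : E | ‖f x‖ ≤ C * ‖x‖} :=
    isClosed_le (by fun_prop) (by fun_prop)
  refine hcl.closure_subset_iff.2 ?_ hx
  intro y hy
  obtain ⟨a, rfl⟩ := Finsupp.mem_span_range_iff_exists_finsupp.1 hy
  simpa only [Set.mem_ofPred_eq, Finsupp.sum, hnorm, Real.norm_eq_abs] using h a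

lemma norm_sum_coord_le
    (hnorm : ∀ a : DyadicTree →₀ ℝ, ‖∑ σ ∈ a.support, a σ • e σ‖ = treeNorm a)
    (hdense : (Submodule.span ℝ (Set.range e)).topologicalClosure = ⊤)
    (hbi1 : ∀ σ : DyadicTree, estar σ (e σ) = 1)
    (hbi0 : ∀ σ τ : DyadicTree, σ ≠ τ → estar σ (e τ) = 0)
    {ι : Type*} (s : Finset ι) (f : ι → DyadicTree)
    (n : ℕ) (hlen : ∀ i ∈ s, n + 1 ≤ (f i).1.length)
    (hinj : ∀ i ∈ s, ∀ j ∈ s, (f i).1.take (n + 1) = (f j).1.take (n + 1) → i = j) :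
    ‖∑ i ∈ s, estar (f i)‖ ≤ Real.sqrt s.card := by
  refine norm_le_of_le_treeNorm hnorm hdense _ (Real.sqrt_nonneg _) fun a => ?_
  have h0 : 0 ≤ treeNorm a := hnorm a ▸ norm_nonneg _
  rw [_root_.sum_apply]
  simp only [coord_apply_sum hbi1 hbi0]
  refine abs_le_of_sq_le_sq ?_ (by positivity)
  rw [mul_pow, Real.sq_sqrt (by positivity)]
  calc (∑ i ∈ s, a (f i)) ^ 2 ≤ s.card * ∑ i ∈ s, a (f i) ^ 2 := sq_sum_le_card_mul_sum_sq
    _ ≤ _ := by gcongr; exact sum_sq_le_treeNorm_sq a s f n hlen hinj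

lemma norm_coord_le
    (hnorm : ∀ a : DyadicTree →₀ ℝ, ‖∑ σ ∈ a.support, a σ • e σ‖ = treeNorm a)
    (hdense : (Submodule.span ℝ (Set.range e)).topologicalClosure = ⊤)
    (hbi1 : ∀ σ : DyadicTree, estar σ (e σ) = 1)
    (hbi0 : ∀ σ τ : DyadicTree, σ ≠ τ → estar σ (e τ) = 0) (σ : DyadicTree) :
    ‖estar σ‖ ≤ 1 := by
  simpa using norm_sum_coord_le hnorm hdense hbi1 hbi0 {()} (fun _ => σ) 0
    (fun _ _ => List.length_pos_iff.2 σ.2) (fun _ _ _ _ _ => rfl)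

lemma IsWeaklyCompact.exists_tendsto {Y : Type*} [NormedAddCommGroup Y] [NormedSpace ℝ Y]
    {W : Set Y} (hW : IsWeaklyCompact W) {ι : Type*} (U : Ultrafilter ι) (u : ι → Y)
    (hu : ∀ i, u i ∈ W) :
    ∃ y ∈ W, ∀ φ : Y →L[ℝ] ℝ, Tendsto (fun i => φ (u i)) U (nhds (φ y)) := by
  obtain ⟨_, ⟨y, hy, rfl⟩, hle⟩ := hW.ultrafilter_le_nhds (U.map fun i => toWeakSpace ℝ Y (u i))
    (by
      rw [le_principal_iff]
      exact Ultrafilter.mem_map.2 (Filter.univ_mem' fun i => ⟨_, hu i, rfl⟩))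
  exact ⟨y, hy, fun φ =>
    ((WeakBilin.eval_continuous (topDualPairing ℝ Y).flip φ).tendsto _).comp hle⟩

/-- A bounded family in a normed space has a limit in the bidual along any ultrafilter. -/
lemma exists_bidual_tendsto {ι : Type*} (U : Ultrafilter ι) (x : ι → E) {C : ℝ}
    (hx : ∀ i, ‖x i‖ ≤ C) :
    ∃ φ : (E →L[ℝ] ℝ) →L[ℝ] ℝ, ∀ f : E →L[ℝ] ℝ, Tendsto (fun i => f (x i)) U (nhds (φ f)) := by
  obtain ⟨φ, -, hφ⟩ := (WeakDual.isCompact_closedBall (𝕜 := ℝ) (E := StrongDual ℝ E)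
    0 C).ultrafilter_le_nhds
    (U.map fun i => StrongDual.toWeakDual (NormedSpace.inclusionInDoubleDual ℝ E (x i))) (by
      rw [le_principal_iff]
      refine Ultrafilter.mem_map.2 (Filter.univ_mem' fun i => ?_)
      simp only [Set.mem_preimage, mem_closedBall_zero_iff]
      exact (NormedSpace.double_dual_bound ℝ E (x i)).trans (hx i))
  exact ⟨WeakDual.toStrongDual φ, fun f => ((WeakDual.eval_continuous f).tendsto φ).comp hφ⟩

/-- A weakly compact set contains only finitely many of the biorthogonal functionals. -/
lemma finite_coord_mem
    (hnorm : ∀ a : DyadicTree →₀ ℝ, ‖∑ σ ∈ a.support, a σ • e σ‖ = treeNorm a)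
    (hdense : (Submodule.span ℝ (Set.range e)).topologicalClosure = ⊤)
    (hbi1 : ∀ σ : DyadicTree, estar σ (e σ) = 1)
    (hbi0 : ∀ σ τ : DyadicTree, σ ≠ τ → estar σ (e τ) = 0)
    {W : Set (E →L[ℝ] ℝ)} (hW : IsWeaklyCompact W) : {σ | estar σ ∈ W}.Finite := by
  classical
  by_contra hA
  obtain ⟨u, huinj, huA, hu⟩ := exists_seq_two_branches hA
  let a : ℕ → DyadicTree →₀ ℝ := fun N =>
    Finsupp.indicator ((Finset.range N).image u) fun _ _ => 1
  have ha : ∀ N σ, a N σ = if σ ∈ (Finset.range N).image u then 1 else 0 := fun N σ => by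
    simp only [a, Finsupp.indicator_apply, dite_eq_ite]
  let x : ℕ → E := fun N => ∑ σ ∈ (a N).support, a N σ • e σ
  have hx : ∀ N, ‖x N‖ ≤ 2 := fun N => by
    refine (hnorm (a N)).trans_le (treeNorm_le_of_two_branches _ (fun σ => ?_) fun n => ?_)
    · rw [ha]; split_ifs <;> norm_num
    · obtain ⟨p, q, hpq⟩ := hu n
      refine ⟨p, q, fun τ hτ hl => ?_⟩
      have hτ' : τ ∈ (Finset.range N).image u := by
        by_contra h
        exact hτ (by rw [ha, if_neg h])
      obtain ⟨k, -, rfl⟩ := Finset.mem_image.1 hτ'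
      exact hpq k hl
  obtain ⟨φ, hφ⟩ := exists_bidual_tendsto (hyperfilter ℕ) x hx
  obtain ⟨y, -, hy⟩ := hW.exists_tendsto (hyperfilter ℕ) (fun k => estar (u k)) huA
  have hφ1 : ∀ k, φ (estar (u k)) = 1 := fun k => by
    refine tendsto_nhds_unique (hφ _) (tendsto_const_nhds.congr' ?_)
    refine Nat.hyperfilter_le_atTop ?_
    filter_upwards [eventually_gt_atTop k] with N hN
    rw [coord_apply_sum hbi1 hbi0, ha, if_pos]
    exact Finset.mem_image_of_mem _ (Finset.mem_range.2 hN)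
  have hy0 : y = 0 := by
    refine ContinuousLinearMap.ext_on (s := Set.range e) ?_ ?_
    · rw [Submodule.dense_iff_topologicalClosure_eq_top, hdense]
    · rintro _ ⟨σ, rfl⟩
      refine tendsto_nhds_unique (hy (NormedSpace.inclusionInDoubleDual ℝ E (e σ)))
        (tendsto_const_nhds.congr' ?_)
      have hfin : {k | u k = σ}.Finite :=
        Set.Subsingleton.finite fun i hi j hj => huinj (hi.trans hj.symm)
      filter_upwards [hfin.compl_mem_hyperfilter] with k hk
      exact (hbi0 _ _ hk).symm
  have h1 : φ y = 1 := tendsto_nhds_unique (hy φ) (by simp only [hφ1]; exact tendsto_const_nhds)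
  rw [hy0, map_zero] at h1
  exact zero_ne_one h1

end TreeSpace

/-- A sequence whose sums over suitable finite sets of large indices are small compared with their
number of terms is weakly null. -/
lemma tendsto_zero_of_norm_sum_le {Y : Type*} [NormedAddCommGroup Y] [NormedSpace ℝ Y] {g : ℕ → Y}
    (h : ∀ ε : ℝ, 0 < ε → ∃ N : ℕ, 0 < N ∧ ∃ m : ℕ, ∀ s : Finset ℕ, s.card = N →
      (∀ i ∈ s, m ≤ i) → ‖∑ i ∈ s, g i‖ ≤ ε * N) (φ : Y →L[ℝ] ℝ) :
    Tendsto (fun n => φ (g n)) atTop (nhds 0) := by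
  have key : ∀ ψ : Y →L[ℝ] ℝ, ∀ ε : ℝ, 0 < ε → ∀ᶠ n in atTop, ψ (g n) < ε := by
    intro ψ ε hε
    by_contra hf
    rw [not_eventually, Nat.frequently_atTop_iff_infinite] at hf
    obtain ⟨N, hN, m, hm⟩ := h (ε / (2 * (‖ψ‖ + 1))) (by positivity)
    obtain ⟨s, hs, hcard⟩ := (hf.sdiff (Set.finite_lt_nat m)).exists_subset_card_eq N
    have h1 := hm s hcard fun i hi => not_lt.1 (hs hi).2
    have h2 : N * ε ≤ ψ (∑ i ∈ s, g i) := by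
      rw [map_sum, ← hcard, ← nsmul_eq_mul]
      exact Finset.card_nsmul_le_sum _ _ _ fun i hi => not_lt.1 (hs hi).1
    have h3 : ψ (∑ i ∈ s, g i) ≤ ‖ψ‖ * (ε / (2 * (‖ψ‖ + 1)) * N) :=
      (le_abs_self _).trans ((ψ.le_opNorm _).trans (by gcongr))
    have h4 : ‖ψ‖ * (ε / (2 * (‖ψ‖ + 1)) * N) ≤ N * ε / 2 := by
      have : ‖ψ‖ / (‖ψ‖ + 1) ≤ 1 := div_le_one_of_le₀ (by linarith) (by positivity)
      calc ‖ψ‖ * (ε / (2 * (‖ψ‖ + 1)) * N) = ‖ψ‖ / (‖ψ‖ + 1) * (N * ε / 2) := by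
            field_simp
        _ ≤ 1 * (N * ε / 2) := by gcongr
        _ = N * ε / 2 := one_mul _
    have h5 : (0 : ℝ) < N * ε := by positivity
    linarith
  rw [Metric.tendsto_nhds]
  intro ε hε
  filter_upwards [key φ ε hε, key (-φ) ε hε] with n h1 h2
  rw [Real.dist_eq, sub_zero, abs_lt]
  rw [neg_apply] at h2
  exact ⟨by linarith, h1⟩

lemma isRelWeaklyCompact_range {Y : Type*} [NormedAddCommGroup Y] [NormedSpace ℝ Y] {g : ℕ → Y}
    (h : ∀ φ : Y →L[ℝ] ℝ, Tendsto (fun n => φ (g n)) atTop (nhds 0)) :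
    IsRelWeaklyCompact (Set.range g) := by
  have ht : Tendsto (fun n => toWeakSpace ℝ Y (g n)) atTop (nhds (toWeakSpace ℝ Y 0)) := by
    refine (WeakBilin.tendsto_iff_forall_eval_tendsto (topDualPairing ℝ Y).flip ?_).2 fun φ => ?_
    · intro x y hxy
      exact (SeparatingDual.eq_iff_forall_dual_eq (R := ℝ)).2 fun φ => LinearMap.congr_fun hxy φ
    · have hφ := h φ
      rwa [← map_zero φ] at hφ
  refine ht.isCompact_insert_range.closure_of_subset ?_
  rintro _ ⟨_, ⟨n, rfl⟩, rfl⟩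
  exact Or.inr ⟨n, rfl⟩

/-- A function bounded by `b`, and by `a` off a set of measure at most `c`, has `L¹` norm at most
`a + b * c`. -/
lemma norm_L1_le_of_bound_off {α Y : Type*} [MeasurableSpace α] {μ : Measure α}
    [IsProbabilityMeasure μ] [NormedAddCommGroup Y] (G : Lp Y 1 μ) {F : α → Y} (hGF : G =ᵐ[μ] F)
    {a b c : ℝ} (ha : 0 ≤ a) (hb : 0 ≤ b) (hc : 0 ≤ c) {C : Set α}
    (hFb : ∀ x, ‖F x‖ ≤ b) (hC : μ C ≤ ENNReal.ofReal c) (hFa : ∀ x, x ∉ C → ‖F x‖ ≤ a) :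
    ‖G‖ ≤ a + b * c := by
  have hpt : ∀ x, ‖F x‖ₑ ≤ ENNReal.ofReal a + C.indicator (fun _ => ENNReal.ofReal b) x := by
    intro x
    rw [← ofReal_norm]
    by_cases hx : x ∈ C
    · rw [Set.indicator_of_mem hx]
      exact (ENNReal.ofReal_le_ofReal (hFb x)).trans le_add_self
    · exact (ENNReal.ofReal_le_ofReal (hFa x hx)).trans le_self_add
  rw [Lp.norm_def, eLpNorm_one_eq_lintegral_enorm]
  refine ENNReal.toReal_le_of_le_ofReal (by positivity) ?_
  calc ∫⁻ x, ‖G x‖ₑ ∂μ = ∫⁻ x, ‖F x‖ₑ ∂μ :=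
        lintegral_congr_ae (hGF.mono fun x h => congrArg enorm h)
    _ ≤ ∫⁻ x, (ENNReal.ofReal a + C.indicator (fun _ => ENNReal.ofReal b) x) ∂μ :=
        lintegral_mono hpt
    _ ≤ ENNReal.ofReal a + ENNReal.ofReal b * μ C := by
        rw [lintegral_add_left measurable_const, lintegral_const, measure_univ, mul_one]
        gcongr
        exact (lintegral_indicator_le _ _).trans_eq (setLIntegral_const _ _)
    _ ≤ ENNReal.ofReal a + ENNReal.ofReal b * ENNReal.ofReal c := by gcongr
    _ = ENNReal.ofReal (a + b * c) := by
        rw [ENNReal.ofReal_add ha (by positivity), ENNReal.ofReal_mul hb]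

section Product

variable {μ : Measure (∀ n : ℕ, Fin (n + 1) → Bool)}

lemma measure_collision_le
    (hμ : ∀ (s : Finset ℕ) (b : ∀ n : ℕ, Fin (n + 1) → Bool),
      μ {ω | ∀ n ∈ s, ω n = b n} = ∏ n ∈ s, ((2 : ℝ≥0∞) ^ (n + 1))⁻¹)
    {m i j : ℕ} (hi : m ≤ i) (hj : m ≤ j) (hij : i ≠ j) :
    μ {ω | (node (ω i)).1.take (m + 1) = (node (ω j)).1.take (m + 1)}
      ≤ ((2 : ℝ≥0∞) ^ (m + 1))⁻¹ := by
  obtain ⟨d, rfl⟩ := Nat.exists_eq_add_of_le hj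
  let glue : (Fin (i + 1) → Bool) → (Fin d → Bool) → Fin (m + d + 1) → Bool := fun b c k =>
    if h : k.1 < m + 1 then b ⟨k.1, by omega⟩ else c ⟨k.1 - (m + 1), by omega⟩
  have hpair : ∀ (b : Fin (i + 1) → Bool) (c : Fin (m + d + 1) → Bool),
      μ {ω | ω i = b ∧ ω (m + d) = c}
        = ((2 : ℝ≥0∞) ^ (i + 1))⁻¹ * ((2 : ℝ≥0∞) ^ (m + d + 1))⁻¹ := by
    intro b c
    let B : ∀ n : ℕ, Fin (n + 1) → Bool :=
      Function.update (Function.update (fun _ _ => true) i b) (m + d) c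
    have h := hμ {i, m + d} B
    rw [Finset.prod_pair hij] at h
    rw [← h]
    congr 1
    ext ω
    simp [B, Function.update_of_ne hij]
  have hsub : {ω : ∀ n : ℕ, Fin (n + 1) → Bool |
      (node (ω i)).1.take (m + 1) = (node (ω (m + d))).1.take (m + 1)} ⊆
      ⋃ bc : (Fin (i + 1) → Bool) × (Fin d → Bool),
        {ω | ω i = bc.1 ∧ ω (m + d) = glue bc.1 bc.2} := by
    intro ω hω
    rw [Set.mem_iUnion]
    refine ⟨(ω i, fun t => ω (m + d) ⟨m + 1 + t.1, by omega⟩), rfl, ?_⟩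
    funext k
    by_cases hk : k.1 < m + 1
    · have h := congrArg (fun l : List Bool => l[k.1]?) hω
      have hki : k.1 < i + 1 := by omega
      simp only [node, List.getElem?_take, hk, if_true, List.getElem?_ofFn, hki, k.2, dif_pos,
        Option.some.injEq] at h
      simp only [glue, hk, dif_pos]
      exact h.symm
    · simp only [glue, hk, dif_neg, not_false_eq_true]
      congr 1
      ext
      simp only
      omega
  calc _ ≤ _ := measure_mono hsub
    _ ≤ ∑ bc : (Fin (i + 1) → Bool) × (Fin d → Bool), _ := measure_iUnion_fintype_le _ _
    _ = (2 : ℝ≥0∞) ^ (i + 1) * 2 ^ d *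
          (((2 : ℝ≥0∞) ^ (i + 1))⁻¹ * ((2 : ℝ≥0∞) ^ (m + d + 1))⁻¹) := by
        simp only [hpair, Finset.sum_const, nsmul_eq_mul, Finset.card_univ, Fintype.card_prod,
          Fintype.card_pi, Fintype.card_bool, Finset.prod_const, Fintype.card_fin]
        push_cast
        rfl
    _ = ((2 : ℝ≥0∞) ^ (i + 1) * ((2 : ℝ≥0∞) ^ (i + 1))⁻¹) * (2 ^ d * ((2 : ℝ≥0∞) ^ d)⁻¹) *
          ((2 : ℝ≥0∞) ^ (m + 1))⁻¹ := by
        rw [show m + d + 1 = d + (m + 1) by ring, pow_add _ d,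
          ENNReal.mul_inv (by simp) (by simp)]
        ring
    _ ≤ _ := by
        rw [ENNReal.mul_inv_cancel (by simp) (by simp), ENNReal.mul_inv_cancel (by simp) (by simp),
          one_mul, one_mul]

variable {E : Type*} [NormedAddCommGroup E] [NormedSpace ℝ E] {e : DyadicTree → E}
  {estar : DyadicTree → E →L[ℝ] ℝ}

lemma norm_sum_Lp_le [IsProbabilityMeasure μ]
    (hμ : ∀ (s : Finset ℕ) (b : ∀ n : ℕ, Fin (n + 1) → Bool),
      μ {ω | ∀ n ∈ s, ω n = b n} = ∏ n ∈ s, ((2 : ℝ≥0∞) ^ (n + 1))⁻¹)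
    (hnorm : ∀ a : DyadicTree →₀ ℝ, ‖∑ σ ∈ a.support, a σ • e σ‖ = treeNorm a)
    (hdense : (Submodule.span ℝ (Set.range e)).topologicalClosure = ⊤)
    (hbi1 : ∀ σ : DyadicTree, estar σ (e σ) = 1)
    (hbi0 : ∀ σ τ : DyadicTree, σ ≠ τ → estar σ (e τ) = 0)
    {g : ℕ → Lp (E →L[ℝ] ℝ) 1 μ}
    (hg : ∀ n : ℕ, (g n : (∀ n : ℕ, Fin (n + 1) → Bool) → E →L[ℝ] ℝ)
      =ᵐ[μ] fun ω => estar (node (ω n)))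
    {m : ℕ} {s : Finset ℕ} (hs : ∀ i ∈ s, m ≤ i) :
    ‖∑ i ∈ s, g i‖ ≤ Real.sqrt s.card + (s.card : ℝ) ^ 3 * (1 / 2) ^ (m + 1) := by
  classical
  let coll : ℕ × ℕ → Set (∀ n : ℕ, Fin (n + 1) → Bool) := fun p =>
    {ω | (node (ω p.1)).1.take (m + 1) = (node (ω p.2)).1.take (m + 1)}
  let C : Set (∀ n : ℕ, Fin (n + 1) → Bool) := ⋃ p ∈ s.offDiag, coll p
  have hC : μ C ≤ (s.card : ℝ≥0∞) ^ 2 * ((2 : ℝ≥0∞) ^ (m + 1))⁻¹ := by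
    calc μ C ≤ ∑ p ∈ s.offDiag, μ (coll p) := measure_biUnion_finset_le _ _
      _ ≤ s.offDiag.card • ((2 : ℝ≥0∞) ^ (m + 1))⁻¹ := by
        refine Finset.sum_le_card_nsmul _ _ _ fun p hp => ?_
        rw [Finset.mem_offDiag] at hp
        exact measure_collision_le hμ (hs _ hp.1) (hs _ hp.2.1) hp.2.2
      _ ≤ _ := by
        rw [nsmul_eq_mul, Finset.offDiag_card, sq]
        gcongr
        exact_mod_cast Nat.sub_le _ _
  have hae : ∀ᵐ ω ∂μ, (∑ i ∈ s, g i : Lp (E →L[ℝ] ℝ) 1 μ) ω = ∑ i ∈ s, estar (node (ω i)) := by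
    filter_upwards [Lp.coeFn_finsetSum s g, (ae_all_iff.2 hg)] with ω h1 h2
    rw [h1, Finset.sum_apply]
    exact Finset.sum_congr rfl fun i _ => h2 i
  have hC' : μ C ≤ ENNReal.ofReal ((s.card : ℝ) ^ 2 * (1 / 2) ^ (m + 1)) := by
    rwa [ENNReal.ofReal_mul (by positivity), ENNReal.ofReal_pow (by positivity),
      ENNReal.ofReal_natCast, ENNReal.ofReal_pow (by positivity), one_div,
      ENNReal.ofReal_inv_of_pos two_pos, ENNReal.ofReal_ofNat, ← ENNReal.inv_pow]
  refine (norm_L1_le_of_bound_off _ hae (a := Real.sqrt s.card) (b := s.card) (by positivity)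
    (by positivity) (by positivity) (fun ω => ?_) hC' fun ω hω => ?_).trans_eq (by ring)
  · refine (norm_sum_le_of_le _ fun i _ => norm_coord_le hnorm hdense hbi1 hbi0 _).trans_eq ?_
    simp
  · refine norm_sum_coord_le hnorm hdense hbi1 hbi0 s (fun i => node (ω i)) m ?_ ?_
    · intro i hi
      simpa [node] using hs i hi
    · intro i hi j hj h
      by_contra hij
      exact hω (Set.mem_biUnion (Finset.mem_offDiag.2 ⟨hi, hj, hij⟩ : (i, j) ∈ s.offDiag) h)

end Product

/-- Talagrand's example: `E` is the Talagrand space on the dyadic tree, `E*` its (separable,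
Schur) dual, `Ω = Πₙ {0,1}ⁿ⁺¹` with the product probability `μ`, `fₙ(ω) = e*_{Pₙ(ω)}`.
Then for every `δ > 0` and weakly compact `W ⊆ E*` there is `n` with `μ (fₙ ⁻¹' W) < δ`;
consequently `{fₙ}` is relatively weakly compact in `L¹(μ,E*)` but not a δS-set, and `E*`
fails property (δSμ). -/
theorem talagrand_dual_fails_deltaS
    {E : Type*} [NormedAddCommGroup E] [NormedSpace ℝ E] [CompleteSpace E]
    (e : DyadicTree → E)
    -- the norm in `E` of a finitely supported combination is given by Talagrand's formula
    (hnorm : ∀ a : DyadicTree →₀ ℝ, ‖∑ σ ∈ a.support, a σ • e σ‖ =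
      ⨆ n : ℕ, Real.sqrt (∑' σ : {σ : DyadicTree // σ.1.length = n + 1},
        (sSup {r : ℝ | ∃ τ : DyadicTree, σ.1.Ext τ ∧ r = |a τ|}) ^ 2))
    (hdense : (Submodule.span ℝ (Set.range e)).topologicalClosure = ⊤)
    -- biorthogonal functionals
    (estar : DyadicTree → E →L[ℝ] ℝ)
    (hbi1 : ∀ σ : DyadicTree, estar σ (e σ) = 1)
    (hbi0 : ∀ σ τ : DyadicTree, σ ≠ τ → estar σ (e τ) = 0)
    -- `μ` is the product probability on `Ω = Πₙ {0,1}ⁿ⁺¹` giving each point of `{0,1}ⁿ⁺¹`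
    -- mass `2^{-(n+1)}`
    (μ : Measure (∀ n : ℕ, Fin (n + 1) → Bool)) [IsProbabilityMeasure μ]
    (hμ : ∀ (s : Finset ℕ) (b : ∀ n : ℕ, Fin (n + 1) → Bool),
      μ {ω | ∀ n ∈ s, ω n = b n} = ∏ n ∈ s, ((2 : ℝ≥0∞) ^ (n + 1))⁻¹) :
    (∀ δ : ℝ, 0 < δ → ∀ W : Set (E →L[ℝ] ℝ), IsWeaklyCompact W →
      ∃ n : ℕ, μ ((fun ω => estar (node (ω n))) ⁻¹' W) < ENNReal.ofReal δ) ∧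
    (∀ g : ℕ → Lp (E →L[ℝ] ℝ) 1 μ,
      (∀ n : ℕ, (g n : (∀ n : ℕ, Fin (n + 1) → Bool) → E →L[ℝ] ℝ)
        =ᵐ[μ] fun ω => estar (node (ω n))) →
      IsRelWeaklyCompact (Set.range g) ∧ ¬ IsDeltaSSet μ (Set.range g)) ∧
    ¬ DeltaSProp μ (E →L[ℝ] ℝ) := by
  have hnorm' : ∀ a : DyadicTree →₀ ℝ, ‖∑ σ ∈ a.support, a σ • e σ‖ = treeNorm a := hnorm
  have hfin : ∀ W : Set (E →L[ℝ] ℝ), IsWeaklyCompact W →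
      ∃ n : ℕ, μ ((fun ω => estar (node (ω n))) ⁻¹' W) = 0 := by
    intro W hW
    obtain ⟨n, hn⟩ := ((finite_coord_mem hnorm' hdense hbi1 hbi0 hW).image
      fun σ : DyadicTree => σ.1.length).bddAbove
    refine ⟨n, ?_⟩
    convert! measure_empty (μ := μ)
    refine Set.eq_empty_of_forall_notMem fun ω hω => ?_
    have h := hn ⟨node (ω n), hω, rfl⟩
    simp [node] at h
  have hmain : ∀ g : ℕ → Lp (E →L[ℝ] ℝ) 1 μ,
      (∀ n : ℕ, (g n : (∀ n : ℕ, Fin (n + 1) → Bool) → E →L[ℝ] ℝ)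
        =ᵐ[μ] fun ω => estar (node (ω n))) →
      IsRelWeaklyCompact (Set.range g) ∧ ¬ IsDeltaSSet μ (Set.range g) := by
    refine fun g hg => ⟨isRelWeaklyCompact_range (tendsto_zero_of_norm_sum_le fun ε hε => ?_),
      fun hS => ?_⟩
    · obtain ⟨N, hN⟩ := exists_nat_gt (max 1 ((2 / ε) ^ 2))
      have hN1 : (1 : ℝ) < N := (le_max_left _ _).trans_lt hN
      have hN2 : 2 / ε ≤ Real.sqrt N :=
        Real.le_sqrt_of_sq_le ((le_max_right _ _).trans hN.le)
      have ht : Tendsto (fun m : ℕ => (N : ℝ) ^ 3 * (1 / 2 : ℝ) ^ (m + 1)) atTop (nhds 0) := by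
        simpa using ((tendsto_add_atTop_iff_nat 1).2 (tendsto_pow_atTop_nhds_zero_of_lt_one
          (r := (1 / 2 : ℝ)) (by norm_num) (by norm_num))).const_mul ((N : ℝ) ^ 3)
      obtain ⟨m, hm⟩ := (ht.eventually_le_const (half_pos hε)).exists
      refine ⟨N, by exact_mod_cast one_pos.trans hN1, m, fun s hcard hs => ?_⟩
      have h := norm_sum_Lp_le hμ hnorm' hdense hbi1 hbi0 hg hs
      rw [hcard] at h
      have h1 : Real.sqrt N ≤ ε / 2 * N := by
        have hsq := Real.mul_self_sqrt (Nat.cast_nonneg (α := ℝ) N)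
        have h2 : 1 ≤ ε / 2 * Real.sqrt N := by
          calc 1 = ε / 2 * (2 / ε) := by field_simp
            _ ≤ _ := by gcongr
        nlinarith [Real.sqrt_nonneg (N : ℝ)]
      nlinarith
    · obtain ⟨W, hW, hWg⟩ := hS.2 (1 / 2) (by norm_num)
      obtain ⟨n, hn⟩ := hfin W hW
      have h := hWg (g n) ⟨n, rfl⟩
      have heq : μ ((g n : (∀ n : ℕ, Fin (n + 1) → Bool) → E →L[ℝ] ℝ) ⁻¹' W) = 0 := by
        rw [← hn]
        exact measure_congr ((hg n).preimage W)
      rw [heq, nonpos_iff_eq_zero, tsub_eq_zero_iff_le, ENNReal.one_le_ofReal] at h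
      norm_num at h
  refine ⟨fun δ hδ W hW => ?_, hmain, fun hP => ?_⟩
  · obtain ⟨n, hn⟩ := hfin W hW
    exact ⟨n, by rw [hn]; exact ENNReal.ofReal_pos.2 hδ⟩
  · have hmem : ∀ n : ℕ, MemLp (fun ω : ∀ n : ℕ, Fin (n + 1) → Bool => estar (node (ω n))) 1 μ := by
      intro n
      refine MemLp.of_bound ?_ 1 (Eventually.of_forall fun ω =>
        norm_coord_le hnorm' hdense hbi1 hbi0 _)
      have hsm : StronglyMeasurable fun v : Fin (n + 1) → Bool => estar (node v) :=
        StronglyMeasurable.of_discrete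
      exact (hsm.comp_measurable (measurable_pi_apply n)).aestronglyMeasurable
    obtain ⟨h1, h2⟩ := hmain (fun n => (hmem n).toLp _) fun n => (hmem n).coeFn_toLp
    exact h2 (hP _ h1)
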